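/- Finitely many function terms and standard names suffice for case splits: let s be a set of clauses, α an objective formula, F a finite set of function terms containing all function terms occurring in s and α, N a finite set of standard names containing all names occurring in s and α, and n̂ ∉ N an additional name. Then s ⊨ˢ B_{k+1} α if and only if there is some t ∈ F such that for all n ∈ N ∪ {n̂}, s ∪ {t ≈ n} ⊨ˢ B_k α. -/

import Mathlib

/-! ## Limited belief: basic syntax and semantics (Schwering 2017, quantifier-free). -/

/-- Standard names (a countably infinite supply). -/
abbrev Name := ℕ

/-- Function terms `f(n₁,…,n_j)`: a function symbol applied to standard names. -/
structure FnTerm where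
  sym : ℕ
  args : List Name
deriving DecidableEq, Inhabited

/-- Literals `t ≈ n` (pos) and `t ≉ n` (neg). -/
inductive Lit where
  | pos (t : FnTerm) (n : Name)
  | neg (t : FnTerm) (n : Name)
deriving DecidableEq

instance : Inhabited Lit := ⟨.pos default 0⟩

/-- The left-hand side (function term) of a literal. -/
def Lit.lhs : Lit → FnTerm
  | .pos t _ => t
  | .neg t _ => t

/-- The right-hand side (standard name) of a literal. -/
def Lit.rhs : Lit → Name
  | .pos _ n => n
  | .neg _ n => n

/-- The negation `¬ℓ` of a literal. -/
def Lit.negate : Lit → Lit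
  | .pos t n => .neg t n
  | .neg t n => .pos t n

/-- Names occurring in a literal. -/
def Lit.names (ℓ : Lit) : Finset Name := insert ℓ.rhs ℓ.lhs.args.toFinset

/-- Two literals are complementary iff they are of the form `t ≈ n` and `t ≉ n`,
or of the form `t ≈ n` and `t ≈ n'` for distinct `n, n'`. -/
def Lit.complementary : Lit → Lit → Bool
  | .pos t n, .neg t' n' => t == t' && n == n'
  | .neg t n, .pos t' n' => t == t' && n == n'
  | .pos t n, .pos t' n' => t == t' && n != n'
  | .neg _ _, .neg _ _ => false

/-- A clause is a (finite) set of literals. -/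
abbrev Clause := Finset Lit

/-- Unit propagation of clause `c` with literal `ℓ`: remove from `c` all
literals complementary to `ℓ`. -/
def Clause.prop (c : Clause) (ℓ : Lit) : Clause :=
  c.filter (fun ℓ' => Lit.complementary ℓ' ℓ = false)

/-- `c₁` subsumes `c₂` iff for every `t ≈ n ∈ c₁`, `t ≈ n ∈ c₂` or `t ≉ n' ∈ c₂`
for some `n' ≠ n`, and for every `t ≉ n ∈ c₁`, `t ≉ n ∈ c₂`. -/
def Clause.subsumes (c₁ c₂ : Clause) : Prop :=
  (∀ t n, Lit.pos t n ∈ c₁ → Lit.pos t n ∈ c₂ ∨ ∃ n', n' ≠ n ∧ Lit.neg t n' ∈ c₂) ∧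
  (∀ t n, Lit.neg t n ∈ c₁ → Lit.neg t n ∈ c₂)

/-- `UP s`: the closure of the set of clauses `s` under unit propagation and
subsumption.  `UP s c` means `c ∈ UP(s)`. -/
inductive UP (s : Set Clause) : Clause → Prop
  | mem {c : Clause} : c ∈ s → UP s c
  | unit {c : Clause} {ℓ : Lit} : UP s {ℓ} → UP s c → UP s (c.prop ℓ)
  | sub {c₁ c₂ : Clause} : UP s c₁ → c₁.subsumes c₂ → UP s c₂

/-- Objective formulas: literals (`atom` is `t ≈ n`, `not atom` is `t ≉ n`),
negation and disjunction. -/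
inductive Form where
  | atom (t : FnTerm) (n : Name)
  | not (φ : Form)
  | or (φ ψ : Form)
deriving DecidableEq

/-- `α ∧ β` abbreviates `¬(¬α ∨ ¬β)`. -/
def Form.and (φ ψ : Form) : Form := .not (.or (.not φ) (.not ψ))

/-- `α → β` abbreviates `¬α ∨ β`. -/
def Form.imp (φ ψ : Form) : Form := .or (.not φ) ψ

/-- A formula is (syntactically) a clause iff it is a disjunction of literals. -/
def Form.isClause : Form → Bool
  | .atom _ _ => true
  | .not (.atom _ _) => true
  | .not _ => false
  | .or φ ψ => φ.isClause && ψ.isClause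

/-- The set of literals of a clause-formula. -/
def Form.lits : Form → Clause
  | .atom t n => {Lit.pos t n}
  | .not (.atom t n) => {Lit.neg t n}
  | .not _ => ∅
  | .or φ ψ => φ.lits ∪ ψ.lits

/-- The limited-belief truth relation `s ⊨ˢ α` for objective formulas:
a clause is true iff it is in `UP(s)`; a non-clause disjunction is true iff one
of its disjuncts is; `¬(α ∨ β)` is true iff `¬α` and `¬β` are; `¬¬α` is true
iff `α` is. -/
def sat (s : Set Clause) : Form → Prop
  | .atom t n => UP s {Lit.pos t n}
  | .not (.atom t n) => UP s {Lit.neg t n}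
  | .not (.not φ) => sat s φ
  | .not (.or φ ψ) => sat s (.not φ) ∧ sat s (.not ψ)
  | .or φ ψ => if (Form.or φ ψ).isClause then UP s (Form.or φ ψ).lits
               else sat s φ ∨ sat s ψ

/-- `satB s k α` is `s ⊨ˢ B_k α`: `B₀ α` holds iff `α` does, and `B_{k+1} α`
holds iff for some function term `t`, for all names `n`,
`s ∪ {t ≈ n} ⊨ˢ B_k α`. -/
def satB (s : Set Clause) : ℕ → Form → Prop
  | 0, φ => sat s φ
  | k+1, φ => ∃ t : FnTerm, ∀ n : Name, satB (s ∪ {({Lit.pos t n} : Clause)}) k φ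

/-- A world maps function terms to standard names. -/
abbrev World := FnTerm → Name

/-- Classical truth of a literal in a world. -/
def Lit.holds (w : World) : Lit → Prop
  | .pos t n => w t = n
  | .neg t n => w t ≠ n

/-- Classical truth of a clause in a world. -/
def Clause.holds (w : World) (c : Clause) : Prop := ∃ ℓ ∈ c, ℓ.holds w

/-- Classical truth of an objective formula in a world. -/
def wsat (w : World) : Form → Prop
  | .atom t n => w t = n
  | .not φ => ¬ wsat w φ
  | .or φ ψ => wsat w φ ∨ wsat w ψ

/-- Classical entailment `s ⊨ α`. -/
def entails (s : Set Clause) (φ : Form) : Prop :=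
  ∀ w : World, (∀ c ∈ s, c.holds w) → wsat w φ

/-- Classical entailment of a clause (disjunction of its literals). -/
def entailsClause (s : Set Clause) (c : Clause) : Prop :=
  ∀ w : World, (∀ c' ∈ s, c'.holds w) → c.holds w

/-- Function terms mentioned in a formula. -/
def Form.terms : Form → Finset FnTerm
  | .atom t _ => {t}
  | .not φ => φ.terms
  | .or φ ψ => φ.terms ∪ ψ.terms

/-- Standard names mentioned in a formula. -/
def Form.names : Form → Finset Name
  | .atom t n => insert n t.args.toFinset
  | .not φ => φ.names
  | .or φ ψ => φ.names ∪ ψ.names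

/-!
A case split on a term `t` occurring neither in `s` nor in `α` contributes nothing: a clause derived
by unit propagation from `s ∪ {t ≈ n}` either is already subsumed by `t ≈ n`, or remains derivable
from `s` once its literals on `t` are dropped. Names outside `N` are interchangeable: transposing
two of them fixes `s` and `α` and commutes with unit propagation and subsumption. Both facts
transfer to `B_k` because each further split can be matched by a split on the same term: on the name
`n` again if the term is `t`, respectively on the transposed name.
-/

/-- The atoms `t ≈ n` occurring in a formula, encoded as pairs `(t, n)`. They bound the clauses that
the truth of the formula depends on; unlike `Form.names`, their second components leave out the
names that occur only as arguments of function terms. -/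
def Form.atoms : Form → Finset (FnTerm × Name)
  | .atom t n => {(t, n)}
  | .not φ => φ.atoms
  | .or φ ψ => φ.atoms ∪ ψ.atoms

theorem Form.atoms_nonempty (φ : Form) : φ.atoms.Nonempty := by
  induction φ with
  | atom t n => exact Finset.singleton_nonempty _
  | not _ ih => exact ih
  | or _ _ ihφ _ => exact ihφ.mono Finset.subset_union_left

theorem Form.fst_mem_terms_of_mem_atoms {φ : Form} {a : FnTerm × Name} (ha : a ∈ φ.atoms) :
    a.1 ∈ φ.terms := by
  induction φ with
  | atom t n => simp_all [Form.atoms, Form.terms]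
  | not _ ih => exact ih ha
  | or _ _ ihφ ihψ => exact Finset.mem_union.2 ((Finset.mem_union.1 ha).imp ihφ ihψ)

theorem Form.snd_mem_names_of_mem_atoms {φ : Form} {a : FnTerm × Name} (ha : a ∈ φ.atoms) :
    a.2 ∈ φ.names := by
  induction φ with
  | atom t n => simp_all [Form.atoms, Form.names]
  | not _ ih => exact ih ha
  | or _ _ ihφ ihψ => exact Finset.mem_union.2 ((Finset.mem_union.1 ha).imp ihφ ihψ)

theorem Form.mem_atoms_of_mem_lits {φ : Form} {ℓ : Lit} (hℓ : ℓ ∈ φ.lits) :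
    (ℓ.lhs, ℓ.rhs) ∈ φ.atoms := by
  induction φ with
  | atom t n => simp_all [Form.lits, Form.atoms, Lit.lhs, Lit.rhs]
  | not ψ _ => cases ψ <;> simp_all [Form.lits, Form.atoms, Lit.lhs, Lit.rhs]
  | or _ _ ihφ ihψ => exact Finset.mem_union.2 ((Finset.mem_union.1 hℓ).imp ihφ ihψ)

theorem sat_of_forall_UP {s s' : Set Clause} : ∀ {φ : Form},
    (∀ c : Clause, (∀ ℓ ∈ c, (ℓ.lhs, ℓ.rhs) ∈ φ.atoms) → UP s c → UP s' c) → sat s φ → sat s' φ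
  | .atom t n, h, hφ => by
    rw [sat] at hφ ⊢
    exact h _ (fun _ => Form.mem_atoms_of_mem_lits (φ := .atom t n)) hφ
  | .not (.atom t n), h, hφ => by
    rw [sat] at hφ ⊢
    exact h _ (fun _ => Form.mem_atoms_of_mem_lits (φ := .not (.atom t n))) hφ
  | .not (.not φ), h, hφ => by
    rw [sat] at hφ ⊢
    exact sat_of_forall_UP (φ := φ) h hφ
  | .not (.or φ ψ), h, hφ => by
    rw [sat] at hφ ⊢
    exact ⟨sat_of_forall_UP (φ := .not φ)
        (fun c hc => h c fun ℓ hℓ => Finset.mem_union_left _ (hc ℓ hℓ)) hφ.1,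
      sat_of_forall_UP (φ := .not ψ)
        (fun c hc => h c fun ℓ hℓ => Finset.mem_union_right _ (hc ℓ hℓ)) hφ.2⟩
  | .or φ ψ, h, hφ => by
    rw [sat] at hφ ⊢
    split_ifs at hφ ⊢
    · exact h _ (fun _ => Form.mem_atoms_of_mem_lits) hφ
    · exact hφ.imp
        (sat_of_forall_UP fun c hc => h c fun ℓ hℓ => Finset.mem_union_left _ (hc ℓ hℓ))
        (sat_of_forall_UP fun c hc => h c fun ℓ hℓ => Finset.mem_union_right _ (hc ℓ hℓ))

theorem satB_of_simulation {α : Form} {R : Set Clause → Set Clause → Prop}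
    (hUP : ∀ s s', R s s' → ∀ c : Clause, (∀ ℓ ∈ c, (ℓ.lhs, ℓ.rhs) ∈ α.atoms) → UP s c → UP s' c)
    (hsplit : ∀ s s', R s s' → ∀ t n', ∃ n,
      R (s ∪ {({Lit.pos t n} : Clause)}) (s' ∪ {({Lit.pos t n'} : Clause)}))
    {k : ℕ} {s s' : Set Clause} (hR : R s s') (hα : satB s k α) : satB s' k α := by
  induction k generalizing s s' with
  | zero => exact sat_of_forall_UP (hUP s s' hR) hα
  | succ k ih =>
    obtain ⟨t, ht⟩ := hα
    refine ⟨t, fun n' => ?_⟩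
    obtain ⟨n, hn⟩ := hsplit s s' hR t n'
    exact ih hn (ht n)

theorem Clause.subsumes_of_subset {c₁ c₂ : Clause} (h : c₁ ⊆ c₂) : c₁.subsumes c₂ :=
  ⟨fun _ _ hp => Or.inl (h hp), fun _ _ hn => h hn⟩

theorem Clause.subsumes.trans {c₁ c₂ c₃ : Clause} (h₁₂ : c₁.subsumes c₂) (h₂₃ : c₂.subsumes c₃) :
    c₁.subsumes c₃ := by
  refine ⟨fun t n hp => ?_, fun t n hn => h₂₃.2 t n (h₁₂.2 t n hn)⟩
  rcases h₁₂.1 t n hp with hp₂ | ⟨n', hne, hn₂⟩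
  · exact h₂₃.1 t n hp₂
  · exact Or.inr ⟨n', hne, h₂₃.2 t n' hn₂⟩

theorem Clause.singleton_pos_subsumes_iff {t : FnTerm} {n : Name} {c : Clause} :
    Clause.subsumes {Lit.pos t n} c ↔
      Lit.pos t n ∈ c ∨ ∃ n', n' ≠ n ∧ Lit.neg t n' ∈ c := by
  simp [Clause.subsumes]

theorem Clause.not_singleton_pos_subsumes_of_forall_lhs_ne {t : FnTerm} {n : Name} {c : Clause}
    (h : ∀ ℓ ∈ c, ℓ.lhs ≠ t) : ¬ Clause.subsumes {Lit.pos t n} c := by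
  rw [Clause.singleton_pos_subsumes_iff]
  rintro (hp | ⟨n', -, hn⟩)
  · exact h _ hp rfl
  · exact h _ hn rfl

theorem Clause.mem_prop {c : Clause} {ℓ ℓ' : Lit} :
    ℓ' ∈ c.prop ℓ ↔ ℓ' ∈ c ∧ ℓ'.complementary ℓ = false :=
  Finset.mem_filter

theorem Lit.complementary_eq_false_of_lhs_ne {ℓ ℓ' : Lit} (h : ℓ.lhs ≠ ℓ'.lhs) :
    ℓ.complementary ℓ' = false := by
  cases ℓ <;> cases ℓ' <;> simp_all [Lit.lhs, Lit.complementary]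

theorem Clause.singleton_pos_subsumes_prop {t : FnTerm} {n : Name} {c : Clause} {ℓ : Lit}
    (hc : Clause.subsumes {Lit.pos t n} c)
    (hℓ : ℓ.lhs = t → Clause.subsumes {Lit.pos t n} {ℓ}) :
    Clause.subsumes {Lit.pos t n} (c.prop ℓ) := by
  have hcompl : (Lit.pos t n).complementary ℓ = false ∧
      ∀ n', n' ≠ n → (Lit.neg t n').complementary ℓ = false := by
    by_cases ht : ℓ.lhs = t
    · rcases Clause.singleton_pos_subsumes_iff.1 (hℓ ht) with hp | ⟨m, hm, hn⟩
      · obtain rfl := Finset.mem_singleton.1 hp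
        simp [Lit.complementary]
      · obtain rfl := Finset.mem_singleton.1 hn
        simp [Lit.complementary, hm.symm]
    · exact ⟨Lit.complementary_eq_false_of_lhs_ne (Ne.symm ht),
        fun _ _ => Lit.complementary_eq_false_of_lhs_ne (Ne.symm ht)⟩
  rw [Clause.singleton_pos_subsumes_iff] at hc ⊢
  exact hc.imp (fun hp => Clause.mem_prop.2 ⟨hp, hcompl.1⟩)
    fun ⟨n', hne, hn⟩ => ⟨n', hne, Clause.mem_prop.2 ⟨hn, hcompl.2 n' hne⟩⟩

/-- The clause obtained from `c` by dropping every literal whose left-hand side is `t`: what is left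
of `c` once `t` is disregarded in a case split. -/
def Clause.eraseTerm (t : FnTerm) (c : Clause) : Clause :=
  c.filter fun ℓ => ℓ.lhs ≠ t

theorem Clause.mem_eraseTerm {t : FnTerm} {c : Clause} {ℓ : Lit} :
    ℓ ∈ c.eraseTerm t ↔ ℓ ∈ c ∧ ℓ.lhs ≠ t :=
  Finset.mem_filter

theorem Clause.eraseTerm_eq_self {t : FnTerm} {c : Clause} (h : ∀ ℓ ∈ c, ℓ.lhs ≠ t) :
    c.eraseTerm t = c :=
  Finset.filter_true_of_mem h

theorem Clause.eraseTerm_singleton (ℓ : Lit) : Clause.eraseTerm ℓ.lhs {ℓ} = ∅ := by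
  simp [Clause.eraseTerm, Finset.filter_singleton]

theorem Clause.eraseTerm_prop (t : FnTerm) (c : Clause) (ℓ : Lit) :
    (c.prop ℓ).eraseTerm t = (c.eraseTerm t).prop ℓ :=
  Finset.filter_comm _ _ _

theorem Clause.prop_eq_self {c : Clause} {ℓ : Lit} (h : ∀ ℓ' ∈ c, ℓ'.lhs ≠ ℓ.lhs) :
    c.prop ℓ = c :=
  Finset.filter_true_of_mem fun ℓ' hℓ' => Lit.complementary_eq_false_of_lhs_ne (h ℓ' hℓ')

theorem Clause.subsumes.eraseTerm {c₁ c₂ : Clause} (h : c₁.subsumes c₂) (t : FnTerm) :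
    (c₁.eraseTerm t).subsumes (c₂.eraseTerm t) := by
  simp only [Clause.subsumes, Clause.mem_eraseTerm]
  refine ⟨fun u n ⟨hp, hu⟩ => ?_, fun u n ⟨hn, hu⟩ => ⟨h.2 u n hn, hu⟩⟩
  exact (h.1 u n hp).imp (fun hp₂ => ⟨hp₂, hu⟩) fun ⟨n', hne, hn⟩ => ⟨n', hne, hn, hu⟩

theorem UP.subsumes_or_eraseTerm {s s' : Set Clause} {t : FnTerm} {n : Name}
    (h : ∀ c ∈ s, Clause.subsumes {Lit.pos t n} c ∨ c.eraseTerm t ∈ s') {c : Clause}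
    (hc : UP s c) : Clause.subsumes {Lit.pos t n} c ∨ UP s' (c.eraseTerm t) := by
  induction hc with
  | mem hc => exact (h _ hc).imp_right UP.mem
  | sub _ hsub ih => exact ih.imp (fun hc => hc.trans hsub) fun hc => hc.sub (hsub.eraseTerm t)
  | @unit c ℓ _ _ ihℓ ihc =>
    by_cases ht : ℓ.lhs = t
    · subst ht
      rcases ihℓ with hℓ | hℓ
      · refine ihc.imp (fun hc => Clause.singleton_pos_subsumes_prop hc fun _ => hℓ) fun hc => ?_
        rwa [Clause.eraseTerm_prop, Clause.prop_eq_self fun _ h => (Clause.mem_eraseTerm.1 h).2]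
      · rw [Clause.eraseTerm_singleton] at hℓ
        exact Or.inr (hℓ.sub (Clause.subsumes_of_subset (Finset.empty_subset _)))
    · have hne : ∀ ℓ' ∈ ({ℓ} : Clause), ℓ'.lhs ≠ t := by simpa using ht
      rw [Clause.eraseTerm_eq_self hne] at ihℓ
      have hℓ : UP s' {ℓ} :=
        ihℓ.resolve_left (Clause.not_singleton_pos_subsumes_of_forall_lhs_ne hne)
      refine ihc.imp (fun hc => Clause.singleton_pos_subsumes_prop hc (absurd · ht)) fun hc => ?_
      rw [Clause.eraseTerm_prop]
      exact hℓ.unit hc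

theorem satB_of_subsumes_or_eraseTerm {α : Form} {t : FnTerm} {n : Name}
    (hα : ∀ a ∈ α.atoms, a.1 ≠ t) {k : ℕ} {s s' : Set Clause}
    (h : ∀ c ∈ s, Clause.subsumes {Lit.pos t n} c ∨ c.eraseTerm t ∈ s')
    (hs : satB s k α) : satB s' k α := by
  refine satB_of_simulation
    (R := fun s s' => ∀ c ∈ s, Clause.subsumes {Lit.pos t n} c ∨ c.eraseTerm t ∈ s')
    (fun s s' h c hcα hc => ?_) (fun s s' h u m => ?_) h hs
  · have hct : ∀ ℓ ∈ c, ℓ.lhs ≠ t := fun ℓ hℓ => hα _ (hcα ℓ hℓ)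
    simpa only [Clause.eraseTerm_eq_self hct] using (hc.subsumes_or_eraseTerm h).resolve_left
      (Clause.not_singleton_pos_subsumes_of_forall_lhs_ne hct)
  · by_cases hu : u = t
    · refine ⟨n, ?_⟩
      rintro c (hc | rfl)
      · exact (h c hc).imp_right Or.inl
      · exact Or.inl (hu ▸ Clause.subsumes_of_subset subset_rfl)
    · refine ⟨m, ?_⟩
      rintro c (hc | rfl)
      · exact (h c hc).imp_right Or.inl
      · exact Or.inr (Or.inr (Clause.eraseTerm_eq_self (by simpa [Lit.lhs] using hu)))

theorem satB_of_satB_union_pos_of_fresh {α : Form} {t : FnTerm} {n : Name} {k : ℕ}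
    {s s' : Set Clause} (hst : ∀ c ∈ s, ∀ ℓ ∈ c, ℓ.lhs ≠ t) (hα : ∀ a ∈ α.atoms, a.1 ≠ t)
    (hss' : s ⊆ s') (h : satB (s ∪ {({Lit.pos t n} : Clause)}) k α) : satB s' k α := by
  refine satB_of_subsumes_or_eraseTerm (t := t) (n := n) hα ?_ h
  rintro c (hc | rfl)
  · exact Or.inr ((Clause.eraseTerm_eq_self (hst c hc)).symm ▸ hss' hc)
  · exact Or.inl (Clause.subsumes_of_subset subset_rfl)

/-- Renaming of the right-hand side of a literal. The function term is left alone, including the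
names among its arguments. -/
def Lit.rename (f : Name → Name) : Lit → Lit
  | .pos t n => .pos t (f n)
  | .neg t n => .neg t (f n)

theorem Lit.rename_eq_self {f : Name → Name} {ℓ : Lit} (h : f ℓ.rhs = ℓ.rhs) :
    ℓ.rename f = ℓ := by
  cases ℓ <;> simp_all [Lit.rename, Lit.rhs]

theorem Lit.complementary_rename {f : Name → Name} (hf : f.Injective) (ℓ ℓ' : Lit) :
    (ℓ.rename f).complementary (ℓ'.rename f) = ℓ.complementary ℓ' := by
  cases ℓ <;> cases ℓ' <;>
    simp [Lit.rename, Lit.complementary, bne, Bool.beq_eq_decide_eq, hf.eq_iff]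

/-- Renaming of the right-hand sides of all literals of a clause, under which unit propagation and
subsumption are invariant for injective `f`. -/
def Clause.rename (f : Name → Name) (c : Clause) : Clause :=
  c.image (Lit.rename f)

theorem Clause.rename_singleton (f : Name → Name) (ℓ : Lit) :
    Clause.rename f {ℓ} = {ℓ.rename f} :=
  Finset.image_singleton _ _

theorem Clause.rename_eq_self {f : Name → Name} {c : Clause} (h : ∀ ℓ ∈ c, f ℓ.rhs = ℓ.rhs) :
    c.rename f = c :=
  (Finset.image_congr fun ℓ hℓ => Lit.rename_eq_self (h ℓ hℓ)).trans Finset.image_id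

theorem Clause.pos_mem_rename {f : Name → Name} {c : Clause} {t : FnTerm} {n : Name} :
    Lit.pos t n ∈ c.rename f ↔ ∃ m, Lit.pos t m ∈ c ∧ f m = n := by
  refine Finset.mem_image.trans ⟨?_, fun ⟨m, hm, hn⟩ => ⟨_, hm, congrArg (Lit.pos t) hn⟩⟩
  rintro ⟨_ | _, hℓ, h⟩ <;> cases h
  exact ⟨_, hℓ, rfl⟩

theorem Clause.neg_mem_rename {f : Name → Name} {c : Clause} {t : FnTerm} {n : Name} :
    Lit.neg t n ∈ c.rename f ↔ ∃ m, Lit.neg t m ∈ c ∧ f m = n := by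
  refine Finset.mem_image.trans ⟨?_, fun ⟨m, hm, hn⟩ => ⟨_, hm, congrArg (Lit.neg t) hn⟩⟩
  rintro ⟨_ | _, hℓ, h⟩ <;> cases h
  exact ⟨_, hℓ, rfl⟩

theorem Clause.rename_prop {f : Name → Name} (hf : f.Injective) (c : Clause) (ℓ : Lit) :
    (c.prop ℓ).rename f = (c.rename f).prop (ℓ.rename f) := by
  simp only [Clause.prop, Clause.rename, Finset.filter_image, Lit.complementary_rename hf]

theorem Clause.subsumes.rename {f : Name → Name} (hf : f.Injective) {c₁ c₂ : Clause}
    (h : c₁.subsumes c₂) : (c₁.rename f).subsumes (c₂.rename f) := by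
  simp only [Clause.subsumes, Clause.pos_mem_rename, Clause.neg_mem_rename]
  constructor
  · rintro t _ ⟨m, hm, rfl⟩
    exact (h.1 t m hm).imp (fun hp => ⟨m, hp, rfl⟩)
      fun ⟨m', hne, hn⟩ => ⟨f m', hf.ne hne, m', hn, rfl⟩
  · rintro t _ ⟨m, hm, rfl⟩
    exact ⟨m, h.2 t m hm, rfl⟩

theorem UP.rename {f : Name → Name} (hf : f.Injective) {s s' : Set Clause}
    (h : ∀ c ∈ s, c.rename f ∈ s') {c : Clause} (hc : UP s c) : UP s' (c.rename f) := by
  induction hc with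
  | mem hc => exact .mem (h _ hc)
  | @unit c ℓ _ _ ihℓ ihc =>
    rw [Clause.rename_singleton] at ihℓ
    rw [Clause.rename_prop hf]
    exact ihℓ.unit ihc
  | sub _ hsub ih => exact ih.sub (hsub.rename hf)

theorem satB_of_rename_mem {α : Form} (π : Equiv.Perm Name) (hα : ∀ a ∈ α.atoms, π a.2 = a.2)
    {k : ℕ} {s s' : Set Clause} (h : ∀ c ∈ s, c.rename π ∈ s') (hs : satB s k α) :
    satB s' k α := by
  refine satB_of_simulation (R := fun s s' => ∀ c ∈ s, c.rename π ∈ s')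
    (fun s s' h c hcα hc => ?_) (fun s s' h t n => ⟨π.symm n, ?_⟩) h hs
  · simpa only [Clause.rename_eq_self fun ℓ hℓ => hα _ (hcα ℓ hℓ)] using hc.rename π.injective h
  · rintro c (hc | rfl)
    · exact Or.inl (h c hc)
    · exact Or.inr (by simp [Clause.rename_singleton, Lit.rename])

theorem satB_union_pos_of_fresh_names {α : Form} {N : Set Name} {t : FnTerm} {n n' : Name} {k : ℕ}
    {s : Set Clause} (hs : ∀ c ∈ s, ∀ ℓ ∈ c, ℓ.rhs ∈ N) (hα : ∀ a ∈ α.atoms, a.2 ∈ N)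
    (hn : n ∉ N) (hn' : n' ∉ N) (h : satB (s ∪ {({Lit.pos t n} : Clause)}) k α) :
    satB (s ∪ {({Lit.pos t n'} : Clause)}) k α := by
  have hfix : ∀ m ∈ N, Equiv.swap n n' m = m := fun m hm =>
    Equiv.swap_apply_of_ne_of_ne (ne_of_mem_of_not_mem hm hn) (ne_of_mem_of_not_mem hm hn')
  refine satB_of_rename_mem (Equiv.swap n n') (fun a ha => hfix _ (hα a ha)) ?_ h
  rintro c (hc | rfl)
  · exact Or.inl ((Clause.rename_eq_self fun ℓ hℓ => hfix _ (hs c hc ℓ hℓ)).symm ▸ hc)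
  · exact Or.inr (by simp [Clause.rename_singleton, Lit.rename])

theorem finite_case_splits_general (s : Set Clause) (α : Form) (F : Set FnTerm) (N : Set Name)
    (hs : ∀ c ∈ s, ∀ ℓ ∈ c, ℓ.lhs ∈ F ∧ ℓ.rhs ∈ N) (hα : ∀ a ∈ α.atoms, a.1 ∈ F ∧ a.2 ∈ N)
    (nhat : Name) (hnhat : nhat ∉ N) (k : ℕ) :
    satB s (k + 1) α ↔
      ∃ t ∈ F, ∀ n ∈ insert nhat N, satB (s ∪ {({Lit.pos t n} : Clause)}) k α := by
  constructor
  · rintro ⟨t, ht⟩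
    by_cases htF : t ∈ F
    · exact ⟨t, htF, fun n _ => ht n⟩
    · obtain ⟨a, ha⟩ := α.atoms_nonempty
      refine ⟨a.1, (hα a ha).1, fun n _ => satB_of_satB_union_pos_of_fresh ?_ ?_
        Set.subset_union_left (ht nhat)⟩
      · exact fun c hc ℓ hℓ => ne_of_mem_of_not_mem (hs c hc ℓ hℓ).1 htF
      · exact fun b hb => ne_of_mem_of_not_mem (hα b hb).1 htF
  · rintro ⟨t, -, ht⟩
    refine ⟨t, fun n => ?_⟩
    by_cases hn : n ∈ N
    · exact ht n (Set.mem_insert_of_mem _ hn)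
    · exact satB_union_pos_of_fresh_names (fun c hc ℓ hℓ => (hs c hc ℓ hℓ).2)
        (fun a ha => (hα a ha).2) hnhat hn (ht nhat (Set.mem_insert _ _))

/-- **Finitely many function terms and names suffice for case splits**
(Lemma 7): with `F` (resp. `N`) containing all function terms (resp. names) of
`s` and `α` and `n̂ ∉ N` a fresh name, `s ⊨ˢ B_{k+1} α` iff for some `t ∈ F`,
for all `n ∈ N ∪ {n̂}`, `s ∪ {t ≈ n} ⊨ˢ B_k α`. -/
theorem finite_case_splits (s : Set Clause) (α : Form)
    (F : Finset FnTerm) (N : Finset Name)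
    (hsF : ∀ c ∈ s, ∀ ℓ ∈ c, Lit.lhs ℓ ∈ F) (hαF : α.terms ⊆ F)
    (hsN : ∀ c ∈ s, ∀ ℓ ∈ c, Lit.names ℓ ⊆ N) (hαN : α.names ⊆ N)
    (nhat : Name) (hnhat : nhat ∉ N) (k : ℕ) :
    satB s (k + 1) α ↔
      ∃ t ∈ F, ∀ n ∈ insert nhat N,
        satB (s ∪ {({Lit.pos t n} : Clause)}) k α := by
  simpa using finite_case_splits_general s α F N
    (fun c hc ℓ hℓ => ⟨hsF c hc ℓ hℓ, hsN c hc ℓ hℓ (Finset.mem_insert_self _ _)⟩)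
    (fun _ ha => ⟨hαF (Form.fst_mem_terms_of_mem_atoms ha),
      hαN (Form.snd_mem_names_of_mem_atoms ha)⟩) nhat hnhat k
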